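/- Let U ⊆ ℝⁿ be open, let u : ℝⁿ → ℝⁿ be a C¹ vector field (not assumed divergence-free), let Pe and μ be real constants, and let φ, φ† : ℝⁿ → ℝ be C² functions satisfying on U the direct eigenvalue equation div(Pe u φ − ∇φ) = μ φ and the modified adjoint eigenvalue equation div( −Pe u φ† − ∇φ† ) + Pe (div u) φ† = μ φ†. Then the modified drift field Pe v* := Pe u φ φ† + φ ∇φ† − φ† ∇φ is divergence-free on U: div( Pe u φ φ† + φ ∇φ† − φ† ∇φ ) = 0 at every point of U. (This is the extension of the divergence-free property of v* to non-solenoidal velocities, e.g. u = v + μ v_Λ arising from a Smoluchowski potential drift, Section 4.2.) -/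

import Mathlib

/-!
By the product rule, with no equation imposed on `φ` and `φ†`,
`div (Pe u φ φ† + φ ∇φ† - φ† ∇φ) = φ† A - φ B`, where `A = div (Pe u φ - ∇φ)` and
`B = div (-Pe u φ† - ∇φ†) + Pe (div u) φ†`: the terms `∇φ · ∇φ†` cancel, and the extra term of `B`
removes its `div u` contribution, so that `div u` is counted exactly once. For eigenfunctions
`A = μ φ` and `B = μ φ†`, hence the right-hand side vanishes. The identity already holds for each
summand `∂ᵢ` of the divergence, which is `drift_summand`.
-/

/-- Gradient of a scalar field on `ℝⁿ` (components w.r.t. the standard basis). -/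
noncomputable def vgrad {n : ℕ} (f : (Fin n → ℝ) → ℝ) (x : Fin n → ℝ) : Fin n → ℝ :=
  fun i => fderiv ℝ f x (Pi.single i 1)

/-- Divergence of a vector field on `ℝⁿ`: `∑ i, ∂ᵢ Fᵢ`. -/
noncomputable def vdiv {n : ℕ} (F : (Fin n → ℝ) → (Fin n → ℝ)) (x : Fin n → ℝ) : ℝ :=
  ∑ i, fderiv ℝ (fun y => F y i) x (Pi.single i 1)

/-- The product-rule identity for one summand of the divergence: `a` stands for `uᵢ`, `p` and `q`
for `∂ᵢφ` and `∂ᵢφ†`, and `v` for the direction `eᵢ`. -/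
lemma drift_summand {n : ℕ} {a f g p q : (Fin n → ℝ) → ℝ} {x : Fin n → ℝ} (v : Fin n → ℝ) (c : ℝ)
    (ha : DifferentiableAt ℝ a x) (hf : DifferentiableAt ℝ f x) (hg : DifferentiableAt ℝ g x)
    (hp : DifferentiableAt ℝ p x) (hq : DifferentiableAt ℝ q x)
    (hfp : fderiv ℝ f x v = p x) (hgq : fderiv ℝ g x v = q x) :
    fderiv ℝ (fun y => c * a y * (f y * g y) + f y * q y - g y * p y) x v =
      g x * fderiv ℝ (fun y => c * a y * f y - p y) x v
        - f x * (fderiv ℝ (fun y => -(c * a y * g y) - q y) x v + c * fderiv ℝ a x v * g x) := by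
  have ha := ha.hasFDerivAt
  have hf := hf.hasFDerivAt
  have hg := hg.hasFDerivAt
  have hp := hp.hasFDerivAt
  have hq := hq.hasFDerivAt
  have h₁ := ((((ha.const_mul c).mul (hf.mul hg)).add (hf.mul hq)).sub (hg.mul hp)).fderiv
  have h₂ := (((ha.const_mul c).mul hf).sub hp).fderiv
  have h₃ := (((ha.const_mul c).mul hg).neg.sub hq).fderiv
  have e₁ := congrArg (fun L => L v) h₁
  have e₂ := congrArg (fun L => L v) h₂
  have e₃ := congrArg (fun L => L v) h₃
  refine e₁.trans (Eq.trans ?_ (congrArg₂ (fun s t => g x * s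
    - f x * (t + c * fderiv ℝ a x v * g x)) e₂ e₃).symm)
  simp [hfp, hgq]
  ring

lemma differentiable_vgrad_apply {n : ℕ} {f : (Fin n → ℝ) → ℝ} (hf : ContDiff ℝ 2 f) (i : Fin n) :
    Differentiable ℝ (fun y => vgrad f y i) := by
  have h : ContDiff ℝ 1 (fderiv ℝ f) := hf.fderiv_right (by norm_num)
  exact (h.clm_apply contDiff_const).differentiable (by norm_num)

/-- Extension of the divergence-free property of the modified drift `Pe v*` to
non-solenoidal velocities `u` (e.g. `u = v + μ v_Λ` from a Smoluchowski potential
drift, Section 4.2), using the modified adjoint eigenproblem with the extra term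
`Pe (div u) φ†`. -/
theorem modified_drift_divergence_free_nonsolenoidal {n : ℕ}
    (U : Set (Fin n → ℝ)) (hU : IsOpen U)
    (u : (Fin n → ℝ) → (Fin n → ℝ)) (hu : ContDiff ℝ 1 u)
    (Pe μ : ℝ) (φ φd : (Fin n → ℝ) → ℝ)
    (hφ : ContDiff ℝ 2 φ) (hφd : ContDiff ℝ 2 φd)
    (hdirect : ∀ x ∈ U,
      vdiv (fun y i => Pe * u y i * φ y - vgrad φ y i) x = μ * φ x)
    (hadj : ∀ x ∈ U,
      vdiv (fun y i => -(Pe * u y i * φd y) - vgrad φd y i) x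
        + Pe * vdiv u x * φd x = μ * φd x) :
    ∀ x ∈ U,
      vdiv (fun y i =>
        Pe * u y i * (φ y * φd y) + φ y * vgrad φd y i - φd y * vgrad φ y i) x = 0 := by
  intro x hx
  have key : vdiv (fun y i =>
      Pe * u y i * (φ y * φd y) + φ y * vgrad φd y i - φd y * vgrad φ y i) x =
      φd x * vdiv (fun y i => Pe * u y i * φ y - vgrad φ y i) x
        - φ x * (vdiv (fun y i => -(Pe * u y i * φd y) - vgrad φd y i) x
          + Pe * vdiv u x * φd x) := by
    simp only [vdiv, Finset.mul_sum, Finset.sum_mul, ← Finset.sum_add_distrib,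
      ← Finset.sum_sub_distrib]
    refine Finset.sum_congr rfl fun i _ => ?_
    have hui : Differentiable ℝ (fun y => u y i) :=
      differentiable_pi.1 (hu.differentiable (by norm_num)) i
    exact drift_summand (Pi.single i 1) Pe (hui x) (hφ.differentiable (by norm_num) x)
      (hφd.differentiable (by norm_num) x) (differentiable_vgrad_apply hφ i x)
      (differentiable_vgrad_apply hφd i x) rfl rfl
  rw [key, hdirect x hx, hadj x hx]
  ring
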